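/- arXiv:2106.08844 — 3 statements merged into one kernel-verified Lean document; each statement's English description precedes it below -/
import Mathlib

section
/- Let λ be a smooth 1-form on ℝ² with dλ = dx∧dy, and let f₁, f₂ be C∞ diffeomorphisms of ℝ² preserving Lebesgue measure and orientation, each equal to the identity outside a compact set. Let g₁, g₂, g₁₂ : ℝ² → ℝ be smooth functions, each vanishing outside a compact set, with dg₁ = f₁*λ − λ, dg₂ = f₂*λ − λ, and dg₁₂ = (f₂∘f₁)*λ − λ. If there is a point x₀ ∈ ℝ² with g₁₂(x₀) = g₁(x₀) + g₂(f₁(x₀)), then ∫_{ℝ²} g₁₂ dx dy = ∫_{ℝ²} g₁ dx dy + ∫_{ℝ²} g₂ dx dy, i.e. A(f₂∘f₁) = A(f₁) + A(f₂). -/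
/-! The 1-form identity `(f₂ ∘ f₁)*λ - λ = (f₁*λ - λ) + f₁*(f₂*λ - λ)` says that `g₁₂` and
`g₁ + g₂ ∘ f₁` have the same derivative. As they agree at `x₀`, they are equal everywhere
(`ℝ²` is connected). Integrating, `∫ g₂ ∘ f₁ = ∫ g₂` because `f₁` preserves the measure. -/

open MeasureTheory

noncomputable section

/-- A `C^∞` diffeomorphism of `ℝ²` preserving Lebesgue measure and orientation. -/
def IsAPDiffeo (f : ℝ × ℝ → ℝ × ℝ) : Prop :=
  ContDiff ℝ (⊤ : ℕ∞) f ∧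
  (∃ g : ℝ × ℝ → ℝ × ℝ, ContDiff ℝ (⊤ : ℕ∞) g ∧
    Function.LeftInverse g f ∧ Function.RightInverse g f) ∧
  MeasurePreserving f volume volume ∧
  (∀ z, 0 < (fderiv ℝ f z).det)

theorem stmt3
    -- λ is a smooth 1-form on ℝ² with dλ = dx ∧ dy
    (lam : ℝ × ℝ → (ℝ × ℝ) →L[ℝ] ℝ) (hlam : ContDiff ℝ (⊤ : ℕ∞) lam)
    (hdlam : ∀ z v w : ℝ × ℝ,
      fderiv ℝ lam z v w - fderiv ℝ lam z w v = v.1 * w.2 - v.2 * w.1)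
    -- f₁, f₂ are C∞ area- and orientation-preserving diffeomorphisms,
    -- identity outside a compact set
    (f₁ f₂ : ℝ × ℝ → ℝ × ℝ) (hf₁ : IsAPDiffeo f₁) (hf₂ : IsAPDiffeo f₂)
    (K₁ K₂ : Set (ℝ × ℝ)) (hK₁ : IsCompact K₁) (hK₂ : IsCompact K₂)
    (hid₁ : ∀ z ∉ K₁, f₁ z = z) (hid₂ : ∀ z ∉ K₂, f₂ z = z)
    -- action functions, each vanishing outside a compact set
    (g₁ g₂ g₁₂ : ℝ × ℝ → ℝ)
    (hg₁sm : ContDiff ℝ (⊤ : ℕ∞) g₁) (hg₂sm : ContDiff ℝ (⊤ : ℕ∞) g₂) (hg₁₂sm : ContDiff ℝ (⊤ : ℕ∞) g₁₂)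
    (hg₁supp : HasCompactSupport g₁) (hg₂supp : HasCompactSupport g₂)
    (hg₁₂supp : HasCompactSupport g₁₂)
    (hg₁ : ∀ z v : ℝ × ℝ, fderiv ℝ g₁ z v = lam (f₁ z) (fderiv ℝ f₁ z v) - lam z v)
    (hg₂ : ∀ z v : ℝ × ℝ, fderiv ℝ g₂ z v = lam (f₂ z) (fderiv ℝ f₂ z v) - lam z v)
    (hg₁₂ : ∀ z v : ℝ × ℝ,
      fderiv ℝ g₁₂ z v = lam (f₂ (f₁ z)) (fderiv ℝ (f₂ ∘ f₁) z v) - lam z v)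
    -- normalization at one point
    (x₀ : ℝ × ℝ) (hx₀ : g₁₂ x₀ = g₁ x₀ + g₂ (f₁ x₀)) :
    ∫ z, g₁₂ z = (∫ z, g₁ z) + ∫ z, g₂ z := by
  obtain ⟨hf₁sm, -, hmp, -⟩ := hf₁
  have dg₁ : Differentiable ℝ g₁ := hg₁sm.differentiable (by simp)
  have dg₂ : Differentiable ℝ g₂ := hg₂sm.differentiable (by simp)
  have dg₁₂ : Differentiable ℝ g₁₂ := hg₁₂sm.differentiable (by simp)
  have df₁ : Differentiable ℝ f₁ := hf₁sm.differentiable (by simp)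
  have df₂ : Differentiable ℝ f₂ := hf₂.1.differentiable (by simp)
  have dcomp : Differentiable ℝ (g₂ ∘ f₁) := dg₂.comp df₁
  have hzero : ∀ z, fderiv ℝ (g₁₂ - (g₁ + g₂ ∘ f₁)) z = 0 := by
    intro z
    rw [fderiv_sub (dg₁₂ z) ((dg₁ z).add (dcomp z)), fderiv_add (dg₁ z) (dcomp z),
      fderiv_comp z (dg₂ _) (df₁ z)]
    refine ContinuousLinearMap.ext fun v => ?_
    simp [hg₁, hg₂, hg₁₂, fderiv_comp z (df₂ _) (df₁ z)]
  have heq : ∀ z, g₁₂ z = g₁ z + g₂ (f₁ z) := by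
    intro z
    have h := is_const_of_fderiv_eq_zero (𝕜 := ℝ) (dg₁₂.sub (dg₁.add dcomp)) hzero z x₀
    simp only [Pi.sub_apply, Pi.add_apply, Function.comp_apply] at h
    linarith
  have hint₁ : Integrable g₁ := hg₁sm.continuous.integrable_of_hasCompactSupport hg₁supp
  have hint₂ : Integrable g₂ := hg₂sm.continuous.integrable_of_hasCompactSupport hg₂supp
  have hint₂' : Integrable (fun z => g₂ (f₁ z)) := hmp.integrable_comp_of_integrable hint₂
  have hchange : ∫ z, g₂ (f₁ z) = ∫ z, g₂ z := by
    conv_rhs => rw [← hmp.map_eq]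
    rw [integral_map hmp.measurable.aemeasurable hg₂sm.continuous.aestronglyMeasurable]
  simp_rw [heq]
  rw [integral_add hint₁ hint₂', hchange]
end
end

section
/- Let h be a C∞ diffeomorphism of ℝ² preserving Lebesgue measure and orientation, equal to the identity outside a compact set K, and let e : ℝ² → ℝ² be any C∞ diffeomorphism preserving Lebesgue measure and orientation. Then e∘h∘e⁻¹ is a C∞ diffeomorphism preserving Lebesgue measure and orientation, equal to the identity outside the compact set e(K), and its total action satisfies A(e∘h∘e⁻¹) = A(h); that is, the total action is invariant under area-preserving conjugation (independent of the area-preserving embedding). -/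
/-!
Write `λ = y dx`. Since `e` preserves area and orientation, its Jacobian determinant is identically
`1` (`fderiv_det_eq_one`), so `e*λ - λ` is a closed `1`-form on the plane, and the Poincaré lemma
gives a primitive `F` (`exists_primitive`). Pulling the equation for the action function `gc` of
`e ∘ h ∘ e⁻¹` back by `e` gives

`d (gc ∘ e) = h*(e*λ) - e*λ = h*λ - λ + d (F ∘ h - F) = d (gh + F ∘ h - F)`,

hence `gc ∘ e = gh + (F ∘ h - F)` up to a constant. The constant is zero, because `e` maps the
unbounded component of `Kᶜ` onto that of `(e '' K)ᶜ` (`InUnboundedComponent.image`), and `h` is the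
identity there. Finally `F ∘ h - F` vanishes off `K`, which `h` maps onto itself preserving area, so
its integral is `0` (`integral_comp_sub_eq_zero`), and `e` preserves the integral of `gc`.
-/

open MeasureTheory Bornology

noncomputable section

/-- `z` lies in the unbounded component of the complement of `K`. -/
def InUnboundedComponent (K : Set (ℝ × ℝ)) (z : ℝ × ℝ) : Prop :=
  z ∉ K ∧ ¬ IsBounded (connectedComponentIn Kᶜ z)

/-- The normalized action function of `h` (w.r.t. the primitive `y dx`),
for `h` equal to the identity outside the compact set `K`. -/
def IsActionFn (h : ℝ × ℝ → ℝ × ℝ) (K : Set (ℝ × ℝ)) (g : ℝ × ℝ → ℝ) : Prop :=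
  ContDiff ℝ (⊤ : ℕ∞) g ∧
  (∀ z v : ℝ × ℝ, fderiv ℝ g z v = (h z).2 * (fderiv ℝ h z v).1 - z.2 * v.1) ∧
  (∀ z, InUnboundedComponent K z → g z = 0)

theorem clm_det_prod (A : ℝ × ℝ →L[ℝ] ℝ × ℝ) :
    A.det = (A (1, 0)).1 * (A (0, 1)).2 - (A (0, 1)).1 * (A (1, 0)).2 := by
  rw [ContinuousLinearMap.det, ← LinearMap.det_toMatrix (Module.Basis.finTwoProd ℝ),
    Matrix.det_fin_two]
  simp [LinearMap.toMatrix_apply]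

/-- The area spanned by two images under `A` is `det A` times the area spanned by the vectors. -/
theorem clm_det_area (A : ℝ × ℝ →L[ℝ] ℝ × ℝ) (u v : ℝ × ℝ) :
    (A u).1 * (A v).2 - (A v).1 * (A u).2 = A.det * (u.1 * v.2 - v.1 * u.2) := by
  have key (w : ℝ × ℝ) : A w = w.1 • A (1, 0) + w.2 • A (0, 1) := by
    rw [← map_smul, ← map_smul, ← map_add]
    simp
  rw [clm_det_prod, key u, key v]
  simp only [Prod.fst_add, Prod.snd_add, Prod.smul_fst, Prod.smul_snd, smul_eq_mul]
  ring

theorem IsAPDiffeo.injective {f : ℝ × ℝ → ℝ × ℝ} (hf : IsAPDiffeo f) : Function.Injective f := by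
  obtain ⟨-, ⟨g, -, hg, -⟩, -⟩ := hf
  exact hg.injective

theorem IsAPDiffeo.differentiable {f : ℝ × ℝ → ℝ × ℝ} (hf : IsAPDiffeo f) :
    Differentiable ℝ f := hf.1.differentiable (by simp)

theorem IsAPDiffeo.measurableEmbedding {f : ℝ × ℝ → ℝ × ℝ} (hf : IsAPDiffeo f) :
    MeasurableEmbedding f :=
  hf.1.continuous.measurableEmbedding hf.injective

/-- By the change of variables formula `|det Df| = 1` almost everywhere, hence everywhere by
continuity, and the sign is fixed by the orientation hypothesis. -/
theorem IsAPDiffeo.fderiv_det_eq_one {f : ℝ × ℝ → ℝ × ℝ} (hf : IsAPDiffeo f) (z : ℝ × ℝ) :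
    (fderiv ℝ f z).det = 1 := by
  have hc : Continuous fun z => (fderiv ℝ f z).det :=
    ContinuousLinearMap.continuous_det.comp (hf.1.continuous_fderiv (by simp))
  have hae : (fun z => ENNReal.ofReal |(fderiv ℝ f z).det|) =ᵐ[volume] fun _ => 1 := by
    refine ae_eq_of_forall_setLIntegral_eq_of_sigmaFinite₀
      (ENNReal.continuous_ofReal.comp hc.abs).aemeasurable aemeasurable_const ?_
    intro s hs _
    rw [lintegral_abs_det_fderiv_eq_addHaar_image volume hs
      (fun x _ => (hf.differentiable x).hasFDerivAt.hasFDerivWithinAt) hf.injective.injOn]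
    have h1 := hf.2.2.1.measure_preimage_emb hf.measurableEmbedding (f '' s)
    rw [hf.injective.preimage_image] at h1
    simp [h1]
  have h2 := congrFun (Measure.eq_of_ae_eq hae (ENNReal.continuous_ofReal.comp hc.abs)
    continuous_const) z
  rw [abs_of_pos (hf.2.2.2 z)] at h2
  simpa using h2

theorem IsAPDiffeo.comp {f g : ℝ × ℝ → ℝ × ℝ} (hf : IsAPDiffeo f) (hg : IsAPDiffeo g) :
    IsAPDiffeo (f ∘ g) := by
  have hfd := hf.differentiable
  have hgd := hg.differentiable
  obtain ⟨hf1, ⟨f', hf2, hf3, hf4⟩, hf5, hf6⟩ := hf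
  obtain ⟨hg1, ⟨g', hg2, hg3, hg4⟩, hg5, hg6⟩ := hg
  refine ⟨hf1.comp hg1, ⟨g' ∘ f', hg2.comp hf2, hf3.comp hg3, hf4.comp hg4⟩, hf5.comp hg5, ?_⟩
  intro z
  rw [fderiv_comp z (hfd _) (hgd _), ContinuousLinearMap.det, ContinuousLinearMap.toLinearMap_comp,
    LinearMap.det_comp]
  exact mul_pos (hf6 _) (hg6 _)

theorem IsAPDiffeo.inverse {f g : ℝ × ℝ → ℝ × ℝ} (hf : IsAPDiffeo f)
    (hg : ContDiff ℝ (⊤ : ℕ∞) g) (hl : Function.LeftInverse g f)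
    (hr : Function.RightInverse g f) : IsAPDiffeo g := by
  have hgd : Differentiable ℝ g := hg.differentiable (by simp)
  refine ⟨hg, ⟨f, hf.1, hr, hl⟩, ⟨hg.continuous.measurable, ?_⟩, ?_⟩
  · conv_lhs => rw [← hf.2.2.1.map_eq]
    rw [Measure.map_map hg.continuous.measurable hf.1.continuous.measurable, hl.comp_eq_id,
      Measure.map_id]
  · intro z
    have h1 : (fderiv ℝ (f ∘ g) z).det = 1 := by
      rw [hr.comp_eq_id, fderiv_id, ContinuousLinearMap.det]
      simp
    rw [fderiv_comp z (hf.differentiable _) (hgd _), ContinuousLinearMap.det,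
      ContinuousLinearMap.toLinearMap_comp, LinearMap.det_comp] at h1
    refine pos_of_mul_pos_right (b := (fderiv ℝ g z).det) (a := (fderiv ℝ f (g z)).det) ?_
      (hf.2.2.2 _).le
    exact h1 ▸ one_pos

/-- The `1`-form `f*(y dx) - y dx` is exact: its exterior derivative is `(1 - det Df) dx ∧ dy`. -/
theorem IsAPDiffeo.exists_primitive {f : ℝ × ℝ → ℝ × ℝ} (hf : IsAPDiffeo f) :
    ∃ F : ℝ × ℝ → ℝ, Differentiable ℝ F ∧
      ∀ z v, fderiv ℝ F z v = (f z).2 * (fderiv ℝ f z v).1 - z.2 * v.1 := by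
  let p : ℝ × ℝ →L[ℝ] ℝ := ContinuousLinearMap.fst ℝ ℝ ℝ
  let q : ℝ × ℝ →L[ℝ] ℝ := ContinuousLinearMap.snd ℝ ℝ ℝ
  let P : (ℝ × ℝ →L[ℝ] ℝ × ℝ) →L[ℝ] (ℝ × ℝ →L[ℝ] ℝ) := ContinuousLinearMap.compL ℝ _ _ _ p
  let ω : ℝ × ℝ → (ℝ × ℝ →L[ℝ] ℝ) := fun z => q (f z) • P (fderiv ℝ f z) - q z • p
  have hf2 : ContDiff ℝ 2 f :=
    hf.1.of_le (WithTop.coe_le_coe.2 (le_top : ((2 : ℕ) : ℕ∞) ≤ ⊤))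
  have hD : Differentiable ℝ (fderiv ℝ f) :=
    (hf2.fderiv_right (m := 1) (by norm_num)).differentiable (by simp)
  have hω (z : ℝ × ℝ) := (((q.hasFDerivAt (x := f z)).comp z (hf.differentiable z).hasFDerivAt).smul
    (P.hasFDerivAt.comp z (hD z).hasFDerivAt)).sub
      ((q.hasFDerivAt (x := z)).smul (hasFDerivAt_const p z))
  -- The same statement with the function in the form `ω`, so that later rewriting finds it.
  have hω' (z : ℝ × ℝ) : HasFDerivAt ω _ z := hω z
  obtain ⟨F, hF⟩ := convex_univ.exists_forall_hasFDerivAt_of_fderiv_symmetric (ω := ω) isOpen_univ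
    (fun z _ => (hω' z).differentiableAt.differentiableWithinAt) (by
      intro z _ u v
      have hs : fderiv ℝ (fderiv ℝ f) z u v = fderiv ℝ (fderiv ℝ f) z v u :=
        (hf2.contDiffAt.isSymmSndFDerivAt (by simp)).eq u v
      have ha := clm_det_area (fderiv ℝ f z) u v
      rw [hf.fderiv_det_eq_one] at ha
      rw [(hω' z).fderiv]
      simp [p, q, P, hs]
      linarith)
  refine ⟨F, fun z => (hF z trivial).differentiableAt, fun z v => ?_⟩
  rw [(hF z trivial).fderiv]
  simp [ω, p, q, P]

/-- A horizontal ray far to the right is connected, unbounded and disjoint from `K`. -/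
theorem exists_inUnboundedComponent {K : Set (ℝ × ℝ)} (hK : IsCompact K) :
    ∃ z, InUnboundedComponent K z := by
  obtain ⟨R, hR⟩ := hK.isBounded.exists_norm_le
  let ray : Set (ℝ × ℝ) := (fun t : ℝ => ((t, 0) : ℝ × ℝ)) '' Set.Ioi R
  have hsub : ray ⊆ Kᶜ := by
    rintro _ ⟨t, ht, rfl⟩ hmem
    have h1 := (norm_fst_le _).trans (hR _ hmem)
    exact absurd ((le_abs_self t).trans h1) (not_le.2 ht)
  have hmem : ((R + 1, 0) : ℝ × ℝ) ∈ ray := ⟨R + 1, by simp, rfl⟩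
  refine ⟨(R + 1, 0), hsub hmem, fun hb => ?_⟩
  have hpre : IsPreconnected ray := isPreconnected_Ioi.image _ (by fun_prop)
  obtain ⟨C, hC⟩ := (hb.subset (hpre.subset_connectedComponentIn hmem hsub)).exists_norm_le
  have h1 := (norm_fst_le _).trans (hC (max (R + 1) (C + 1), 0)
    ⟨_, lt_of_lt_of_le (lt_add_one R) (le_max_left _ _), rfl⟩)
  have h2 := (le_max_right (R + 1) (C + 1)).trans ((le_abs_self _).trans h1)
  linarith

theorem InUnboundedComponent.image {K : Set (ℝ × ℝ)} {z : ℝ × ℝ} (hz : InUnboundedComponent K z)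
    (e : ℝ × ℝ ≃ₜ ℝ × ℝ) : InUnboundedComponent (e '' K) (e z) := by
  refine ⟨by simpa using hz.1, fun hb => hz.2 ?_⟩
  rw [← Set.image_compl_eq e.bijective, ← e.image_connectedComponentIn hz.1] at hb
  refine (hb.isCompact_closure.image e.symm.continuous).isBounded.subset fun x hx => ?_
  exact ⟨e x, subset_closure ⟨x, hx, rfl⟩, by simp⟩

theorem mem_iff_of_eq_id_off {h : ℝ × ℝ → ℝ × ℝ} {K : Set (ℝ × ℝ)} (hi : Function.Injective h)
    (hid : ∀ z ∉ K, h z = z) (z : ℝ × ℝ) : h z ∈ K ↔ z ∈ K := by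
  by_cases hz : z ∈ K
  · refine iff_of_true ?_ hz
    by_contra hc
    rw [hi (hid _ hc)] at hc
    exact hc hz
  · rw [hid z hz]

theorem integral_comp_sub_eq_zero {h : ℝ × ℝ → ℝ × ℝ} {K : Set (ℝ × ℝ)} (hK : IsCompact K)
    (hh : IsAPDiffeo h) (hid : ∀ z ∉ K, h z = z) {F : ℝ × ℝ → ℝ} (hF : Continuous F) :
    Integrable (fun z => F (h z) - F z) ∧ ∫ z, (F (h z) - F z) = 0 := by
  have hFh : Continuous fun z => F (h z) := hF.comp hh.1.continuous
  have hzero : ∀ z ∉ K, F (h z) - F z = 0 := fun z hz => by rw [hid z hz, sub_self]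
  refine ⟨(hFh.sub hF).integrable_of_hasCompactSupport (.intro hK hzero), ?_⟩
  rw [← setIntegral_eq_integral_of_forall_compl_eq_zero hzero,
    integral_sub (hFh.continuousOn.integrableOn_compact hK)
      (hF.continuousOn.integrableOn_compact hK), sub_eq_zero,
    ← hh.2.2.1.setIntegral_preimage_emb hh.measurableEmbedding F K]
  congr 2
  exact Set.ext fun z => (mem_iff_of_eq_id_off hh.injective hid z).symm

theorem stmt6 (h : ℝ × ℝ → ℝ × ℝ) (K : Set (ℝ × ℝ)) (hK : IsCompact K)
    (hdiffeo : IsAPDiffeo h) (hid : ∀ z ∉ K, h z = z)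
    -- e is any C∞ area- and orientation-preserving diffeomorphism, with inverse e'
    (e e' : ℝ × ℝ → ℝ × ℝ) (he : IsAPDiffeo e) (he'sm : ContDiff ℝ (⊤ : ℕ∞) e')
    (hinv : Function.LeftInverse e' e ∧ Function.RightInverse e' e) :
    IsAPDiffeo (e ∘ h ∘ e') ∧
    IsCompact (e '' K) ∧
    (∀ z ∉ e '' K, (e ∘ h ∘ e') z = z) ∧
    (∀ gh gc : ℝ × ℝ → ℝ, IsActionFn h K gh → IsActionFn (e ∘ h ∘ e') (e '' K) gc →
      ∫ z, gc z = ∫ z, gh z) := by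
  have he' : IsAPDiffeo e' := he.inverse he'sm hinv.1 hinv.2
  have hconj : IsAPDiffeo (e ∘ h ∘ e') := he.comp (hdiffeo.comp he')
  refine ⟨hconj, hK.image he.1.continuous, ?_, ?_⟩
  · intro z hz
    have h1 : e' z ∉ K := fun hk => hz ⟨_, hk, hinv.2 z⟩
    simp [hid _ h1, hinv.2 z]
  rintro gh gc ⟨hgh1, hgh2, hgh3⟩ ⟨hgc1, hgc2, hgc3⟩
  obtain ⟨F, hFd, hF⟩ := he.exists_primitive
  have hed := he.differentiable
  have hhd := hdiffeo.differentiable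
  have hghd : Differentiable ℝ gh := hgh1.differentiable (by simp)
  have hgcd : Differentiable ℝ gc := hgc1.differentiable (by simp)
  have hce : (e ∘ h ∘ e') ∘ e = e ∘ h := by
    funext z
    simp [hinv.1 z]
  let D : ℝ × ℝ → ℝ := fun z => gc (e z) - (gh z + (F (h z) - F z))
  have hDd : Differentiable ℝ D :=
    (hgcd.comp hed).sub (hghd.add ((hFd.comp hhd).sub hFd))
  have hD0 (z : ℝ × ℝ) : fderiv ℝ D z = 0 := by
    have h1 : HasFDerivAt D _ z :=
      ((hgcd (e z)).hasFDerivAt.comp z (hed z).hasFDerivAt).sub ((hghd z).hasFDerivAt.add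
        (((hFd (h z)).hasFDerivAt.comp z (hhd z).hasFDerivAt).sub (hFd z).hasFDerivAt))
    refine ContinuousLinearMap.ext fun v => ?_
    have hch : fderiv ℝ (e ∘ h ∘ e') (e z) (fderiv ℝ e z v)
        = fderiv ℝ e (h z) (fderiv ℝ h z v) := by
      have h2 := fderiv_comp z (hconj.differentiable (e z)) (hed z)
      rw [hce, fderiv_comp z (hed (h z)) (hhd z)] at h2
      exact (DFunLike.congr_fun h2 v).symm
    have hcz : (e ∘ h ∘ e') (e z) = e (h z) := congrFun hce z
    rw [h1.fderiv]
    change fderiv ℝ gc (e z) (fderiv ℝ e z v)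
      - (fderiv ℝ gh z v + (fderiv ℝ F (h z) (fderiv ℝ h z v) - fderiv ℝ F z v)) = 0
    rw [hgc2, hgh2, hF, hF, hch, hcz]
    ring
  have hDz (z : ℝ × ℝ) : D z = 0 := by
    obtain ⟨w, hw⟩ := exists_inUnboundedComponent hK
    let E : ℝ × ℝ ≃ₜ ℝ × ℝ :=
      ⟨⟨e, e', hinv.1, hinv.2⟩, he.1.continuous, he'sm.continuous⟩
    rw [is_const_of_fderiv_eq_zero hDd hD0 z w]
    have h1 : gc (e w) = 0 := hgc3 _ (hw.image E)
    simp [D, h1, hgh3 w hw, hid w hw.1]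
  obtain ⟨hint, hzero⟩ := integral_comp_sub_eq_zero hK hdiffeo hid hFd.continuous
  rw [← he.2.2.1.integral_comp he.measurableEmbedding gc]
  have heq : (fun z => gc (e z)) = fun z => gh z + (F (h z) - F z) :=
    funext fun z => sub_eq_zero.1 (hDz z)
  rw [heq]
  by_cases hi : Integrable gh
  · rw [integral_add hi hint, hzero, add_zero]
  -- If `gh` were not integrable, both integrals would be zero by convention.
  · rw [integral_undef hi, integral_undef]
    exact fun hc => hi ((integrable_add_iff_integrable_left' hint).1 hc)
end
end

section
/- Let X be a set, f : X → X a bijection, q ≥ 1 an integer, and U₀ ⊆ X a subset such that the sets U_i := f^{−i}(U₀) for 0 ≤ i ≤ q−1 are pairwise disjoint. Let h : X → X be a map with h(x) = x for all x ∉ U₀ and h(U₀) ⊆ U₀. If the map h∘f has a periodic point in U₀ ∪ U₁ ∪ … ∪ U_{q−1}, then h∘f has a periodic point in U₀. -/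
/-!
Write `g = h ∘ f`. A point of `f^{-i}(U₀)` reaches `U₀` under `g` in at most `i` steps: as long as
its `f`-orbit stays outside `U₀`, `h` acts trivially and `g` follows `f`, and upon the first entry
into `U₀` the map `h` keeps the point there. Every point on the `g`-orbit of a periodic point is
periodic with the same period.
-/

theorem exists_iterate_mem_of_iterate_mem {X : Type*} {f h : X → X} {U₀ : Set X}
    (hid : ∀ x ∉ U₀, h x = x) (hmaps : Set.MapsTo h U₀ U₀) (i : ℕ) {x : X}
    (hx : f^[i] x ∈ U₀) : ∃ k, (h ∘ f)^[k] x ∈ U₀ := by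
  induction i generalizing x with
  | zero => exact ⟨0, hx⟩
  | succ i ih =>
    by_cases hfx : f x ∈ U₀
    · exact ⟨1, hmaps hfx⟩
    · obtain ⟨k, hk⟩ := ih (x := f x) hx
      refine ⟨k + 1, ?_⟩
      rwa [Function.iterate_succ_apply, Function.comp_apply, hid _ hfx]

theorem stmt14 {X : Type*} (f : X → X) (hf : Function.Bijective f)
    (q : ℕ) (hq : 1 ≤ q) (U₀ : Set X)
    (hdisj : ∀ i j, i < q → j < q → i ≠ j →
      Disjoint (f^[i] ⁻¹' U₀) (f^[j] ⁻¹' U₀))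
    (h : X → X) (hid : ∀ x ∉ U₀, h x = x) (hmaps : Set.MapsTo h U₀ U₀)
    (hper : ∃ x ∈ ⋃ i < q, f^[i] ⁻¹' U₀, ∃ n : ℕ, 1 ≤ n ∧ (h ∘ f)^[n] x = x) :
    ∃ x ∈ U₀, ∃ n : ℕ, 1 ≤ n ∧ (h ∘ f)^[n] x = x := by
  obtain ⟨x, hx, n, hn, hnx⟩ := hper
  obtain ⟨i, -, hi⟩ := Set.mem_iUnion₂.mp hx
  obtain ⟨k, hk⟩ := exists_iterate_mem_of_iterate_mem hid hmaps i hi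
  refine ⟨(h ∘ f)^[k] x, hk, n, hn, ?_⟩
  rw [← Function.iterate_add_apply, Nat.add_comm, Function.iterate_add_apply, hnx]
end
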